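/- Let s ≥ 1 and j ≥ 1 be integers and let q = ∏_{α ∈ (ℤ/2)^s \ {0}} (α₁u₁ + ⋯ + α_s u_s) ∈ 𝔽₂[u₁,…,u_s] be the top Dickson polynomial. Then q^j does not belong to the ideal of 𝔽₂[u₁,…,u_s] generated by u₁^(j+1), u₂^(2j+1), u₃^(4j+1), …, u_s^(j·2^(s−1)+1). -/

import Mathlib

/-!
Order the monomials so that `u₁ < u₂ < ⋯ < u_s`. The leading monomial of a linear form is then the
last variable occurring in it, and leading monomials multiply, so the exponent of `u_ℓ` in the
leading monomial of `q` is the number of coefficient vectors whose last nonzero entry is the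
`ℓ`-th. Over a field with `c` elements there are `(c - 1) * c ^ (ℓ - 1)` of these. Hence the leading
monomial of `q ^ j` is divisible by none of the generators of the monomial ideal.
-/

open MvPolynomial Finset

section MonomialIdeal

variable {σ R : Type*} [CommSemiring R]

theorem mem_span_range_X_pow_iff {e : σ → ℕ} {p : MvPolynomial σ R} :
    p ∈ Ideal.span (Set.range fun i => (X i : MvPolynomial σ R) ^ e i) ↔
      ∀ d ∈ p.support, ∃ i, e i ≤ d i := by
  have range_eq_image : (Set.range fun i => (X i : MvPolynomial σ R) ^ e i) =
      (fun d => monomial d (1 : R)) '' Set.range fun i => Finsupp.single i (e i) := by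
    simp only [← Set.range_comp, Function.comp_def, X_pow_eq_monomial]
  simp only [range_eq_image, mem_ideal_span_monomial_image, Set.exists_range_iff,
    Finsupp.single_le_iff]

end MonomialIdeal

section LastNonzeroEntry

variable {σ K : Type*} [LinearOrder σ] [Zero K]

theorem exists_isGreatest_support [Finite σ] {α : σ → K} (hα : α ≠ 0) :
    ∃ k, IsGreatest (Function.support α) k := by
  obtain ⟨k, hk⟩ := (Set.toFinite (Function.support α)).exists_maximal
    (Function.support_nonempty_iff.mpr hα)
  exact ⟨k, maximal_iff_isGreatest.mp hk⟩

theorem isGreatest_support_iff {α : σ → K} {k : σ} :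
    IsGreatest (Function.support α) k ↔ α k ≠ 0 ∧ ∀ i, k < i → α i = 0 := by
  refine and_congr Iff.rfl (forall_congr' fun i => ?_)
  rw [Function.mem_support, ← not_lt, not_imp_not]

open Classical in
theorem card_isGreatest_support [Fintype σ] [LocallyFiniteOrderBot σ] [Fintype K] (k : σ) :
    #{α : σ → K | IsGreatest (Function.support α) k} =
      (Fintype.card K - 1) * Fintype.card K ^ #(Iio k) := by
  let choices (i : σ) : Finset K := if i = k then {0}ᶜ else if i < k then univ else {0}
  have eq_piFinset : ({α : σ → K | IsGreatest (Function.support α) k} : Finset (σ → K)) =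
      Fintype.piFinset choices := by
    ext α
    simp only [mem_filter_univ, Fintype.mem_piFinset, isGreatest_support_iff, choices]
    grind [mem_compl]
  have card_choices_of_ne (i : σ) (hi : i ∈ univ.erase k) :
      #(choices i) = if i < k then Fintype.card K else 1 := by
    simp only [choices, if_neg (ne_of_mem_erase hi)]
    split_ifs <;> simp
  calc #{α : σ → K | IsGreatest (Function.support α) k}
      = ∏ i, #(choices i) := by rw [eq_piFinset, Fintype.card_piFinset]
    _ = #(choices k) * ∏ i ∈ univ.erase k, #(choices i) :=
        (mul_prod_erase _ _ (mem_univ k)).symm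
    _ = (Fintype.card K - 1) * ∏ i ∈ univ.erase k, if i < k then Fintype.card K else 1 := by
        rw [prod_congr rfl card_choices_of_ne]
        simp [choices, card_compl]
    _ = (Fintype.card K - 1) * Fintype.card K ^ #(Iio k) := by
        have filter_eq : {i ∈ univ.erase k | i < k} = Iio k := by
          ext i
          simpa using ne_of_lt
        rw [← prod_filter, prod_const, filter_eq]

end LastNonzeroEntry

section LinearForm

variable {σ R : Type*} [Fintype σ] [CommSemiring R]

/-- The linear form `∑ i, α i * u i` with coefficient vector `α`. -/
noncomputable def linearForm (α : σ → R) : MvPolynomial σ R :=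
  ∑ i, C (α i) * X i

theorem mem_support_linearForm {α : σ → R} {d : σ →₀ ℕ} :
    d ∈ (linearForm α).support ↔ ∃ i, α i ≠ 0 ∧ Finsupp.single i 1 = d := by
  classical
  have coeff_eq : coeff d (linearForm α) = ∑ i, if Finsupp.single i 1 = d then α i else 0 := by
    simp only [linearForm, coeff_sum, coeff_C_mul, coeff_X, mul_ite, mul_one, mul_zero]
  rw [mem_support_iff, coeff_eq]
  constructor
  · intro sum_ne_zero
    obtain ⟨i, -, hi⟩ := exists_ne_zero_of_sum_ne_zero sum_ne_zero
    exact ⟨i, (ite_ne_right_iff.mp hi).symm⟩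
  · rintro ⟨i, hi, rfl⟩
    simpa [Finsupp.single_left_inj] using hi

theorem linearForm_ne_zero {α : σ → R} (hα : α ≠ 0) : linearForm α ≠ 0 := by
  obtain ⟨i, hi⟩ := Function.ne_iff.mp hα
  exact support_nonempty.mp ⟨_, mem_support_linearForm.mpr ⟨i, hi, rfl⟩⟩

theorem degree_linearForm [Preorder σ] {m : MonomialOrder σ}
    (hm : Monotone fun i => m.toSyn (Finsupp.single i 1)) {α : σ → R} {k : σ}
    (hk : IsGreatest (Function.support α) k) :
    m.degree (linearForm α) = Finsupp.single k 1 := by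
  refine m.toSyn.injective (le_antisymm (m.degree_le_iff.mpr fun d hd => ?_)
    (m.le_degree (mem_support_linearForm.mpr ⟨k, hk.1, rfl⟩)))
  obtain ⟨i, hi, rfl⟩ := mem_support_linearForm.mp hd
  exact hm (hk.2 hi)

open Classical in
theorem degree_linearForm_apply [LinearOrder σ] {m : MonomialOrder σ}
    (hm : Monotone fun i => m.toSyn (Finsupp.single i 1)) {α : σ → R} (hα : α ≠ 0) (k : σ) :
    m.degree (linearForm α) k = if IsGreatest (Function.support α) k then 1 else 0 := by
  obtain ⟨l, hl⟩ := exists_isGreatest_support hα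
  rw [degree_linearForm hm hl, Finsupp.single_apply]
  exact if_congr ⟨fun h => h ▸ hl, hl.unique⟩ rfl rfl

end LinearForm

section TopDickson

variable {σ K : Type*} [Fintype σ] [Field K] [Fintype K] [DecidableEq K]

variable (σ K) in
/-- The top Dickson polynomial: the product of all nonzero linear forms in the variables indexed by
`σ` over the finite field `K`. -/
noncomputable def topDickson [DecidableEq σ] : MvPolynomial σ K :=
  ∏ α : σ → K with α ≠ 0, linearForm α

theorem topDickson_ne_zero [DecidableEq σ] : topDickson σ K ≠ 0 :=
  prod_ne_zero_iff.mpr fun _ hα => linearForm_ne_zero (mem_filter.mp hα).2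

variable [LinearOrder σ] [LocallyFiniteOrderBot σ]

theorem degree_topDickson_apply {m : MonomialOrder σ}
    (hm : Monotone fun i => m.toSyn (Finsupp.single i 1)) (k : σ) :
    m.degree (topDickson σ K) k = (Fintype.card K - 1) * Fintype.card K ^ #(Iio k) := by
  classical
  have ne_zero_of_isGreatest (α : σ → K) (hα : IsGreatest (Function.support α) k) : α ≠ 0 :=
    Function.ne_iff.mpr ⟨k, hα.1⟩
  calc m.degree (topDickson σ K) k
      = ∑ α : σ → K with α ≠ 0, m.degree (linearForm α) k := by
        rw [topDickson, m.degree_prod fun _ hα => linearForm_ne_zero (mem_filter.mp hα).2,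
          Finsupp.finsetSum_apply]
    _ = ∑ α : σ → K with α ≠ 0, if IsGreatest (Function.support α) k then 1 else 0 :=
        sum_congr rfl fun _ hα => degree_linearForm_apply hm (mem_filter.mp hα).2 k
    _ = #{α : σ → K | IsGreatest (Function.support α) k} := by
        rw [sum_boole, filter_filter, Nat.cast_id,
          filter_congr fun α _ => and_iff_right_of_imp (ne_zero_of_isGreatest α)]
    _ = (Fintype.card K - 1) * Fintype.card K ^ #(Iio k) :=
        card_isGreatest_support k

theorem pow_top_dickson_not_mem_ideal_general (j : ℕ) :
    topDickson σ K ^ j ∉ Ideal.span (Set.range fun k : σ =>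
      (X k : MvPolynomial σ K) ^ (j * ((Fintype.card K - 1) * Fintype.card K ^ #(Iio k)) + 1)) := by
  let m : MonomialOrder σ := MonomialOrder.lex (σ := σᵒᵈ)
  have hm : Monotone fun i => m.toSyn (Finsupp.single i 1) := fun _ _ h =>
    (Finsupp.Lex.single_strictAnti (α := σᵒᵈ)).antitone h
  intro mem_ideal
  obtain ⟨k, hk⟩ := mem_span_range_X_pow_iff.mp mem_ideal _
    (m.degree_mem_support (pow_ne_zero j topDickson_ne_zero))
  rw [m.degree_pow, Finsupp.smul_apply, degree_topDickson_apply hm, smul_eq_mul] at hk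
  exact Nat.not_succ_le_self _ hk

end TopDickson

/-- The `j`-th power of the top Dickson polynomial
`q = ∏_{α ∈ (ℤ/2)ˢ \ {0}} (α₁u₁ + ⋯ + α_s u_s) ∈ 𝔽₂[u₁,…,u_s]` does not lie in the ideal
generated by `u₁^(j+1), u₂^(2j+1), …, u_s^(j·2^(s−1)+1)`, i.e. by `u_ℓ^(j·2^(ℓ−1)+1)` for
`1 ≤ ℓ ≤ s`. -/
theorem pow_top_dickson_not_mem_ideal (s j : ℕ) (hs : 1 ≤ s) (hj : 1 ≤ j) :
    (∏ α ∈ Finset.univ.filter (fun α : Fin s → ZMod 2 => α ≠ 0),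
        ∑ i, MvPolynomial.C (α i) * MvPolynomial.X i) ^ j ∉
      Ideal.span (Set.range fun ℓ : Fin s =>
        (MvPolynomial.X ℓ : MvPolynomial (Fin s) (ZMod 2)) ^ (j * 2 ^ (ℓ : ℕ) + 1)) := by
  simpa [topDickson, linearForm] using
    pow_top_dickson_not_mem_ideal_general (σ := Fin s) (K := ZMod 2) j
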